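/- Let f : ℝⁿ → ℝ be continuously differentiable and strongly convex with constant μ > 0, and fix x⁰ ∈ ℝⁿ. Then for every η > 0 there exists τ > 0 such that for every x with f(x) ≤ f(x⁰) and ‖∇f(x)‖ ≥ η, one has f(x - t•∇f(x)) ≤ f(x) - (η²/2)·t for all t ∈ [0, τ]. -/

import Mathlib

/-!
On a compact set of pairs `(x, v)` at which the directional derivative of a `C¹` function is
below `b`, the tube lemma keeps it below `b` along all segments `x + s • v` with `0 ≤ s ≤ τ`, for
one common `τ > 0`; the mean value inequality then bounds the increments of `f`. With
`v = -∇f(x)` and `‖∇f(x)‖ ≥ η` the directional derivative is at most `-η² < -η² / 2`.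
Strong convexity makes the sublevel set compact: the quadratic lower bound at `x⁰` confines it to
the closed ball of radius `2‖f'(x⁰)‖ / μ` around `x⁰`.
-/

open Filter Set Topology
open scoped Gradient

section NormedSpace

variable {E : Type*} [NormedAddCommGroup E] [NormedSpace ℝ E] {f : E → ℝ}

theorem strongConvexOn_univ_of_forall_mem_Icc {m : ℝ}
    (hf : ∀ x y : E, ∀ t : ℝ, t ∈ Icc (0 : ℝ) 1 →
      f (t • x + (1 - t) • y) ≤ t * f x + (1 - t) * f y - m / 2 * t * (1 - t) * ‖x - y‖ ^ 2) :
    StrongConvexOn univ m f := by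
  refine ⟨convex_univ, fun x _ y _ a b ha hb hab ↦ ?_⟩
  obtain rfl : b = 1 - a := by linarith
  simp only [smul_eq_mul]
  linarith [hf x y a ⟨ha, sub_nonneg.1 hb⟩]

theorem add_lineDeriv_add_le_of_uniformConvexOn {s : Set E} {φ : ℝ → ℝ}
    (hf : UniformConvexOn s φ f) {x y : E} (hx : x ∈ s) (hy : y ∈ s) {f' : ℝ}
    (hf' : HasLineDerivAt ℝ f f' x (y - x)) :
    f x + f' + φ ‖y - x‖ ≤ f y := by
  have slope_le : ∀ᶠ t : ℝ in 𝓝[>] 0,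
      t⁻¹ • (f (x + t • (y - x)) - f x) ≤ f y - f x - (1 - t) * φ ‖y - x‖ := by
    filter_upwards [Ioc_mem_nhdsGT one_pos] with t ht
    have convexity := hf.2 hy hx ht.1.le (sub_nonneg.2 ht.2) (add_sub_cancel t 1)
    rw [show t • y + (1 - t) • x = x + t • (y - x) by module] at convexity
    simp only [smul_eq_mul] at convexity ⊢
    rw [inv_mul_le_iff₀ ht.1]
    linarith
  have bound_tendsto : Tendsto (fun t : ℝ ↦ f y - f x - (1 - t) * φ ‖y - x‖) (𝓝[>] 0)
      (𝓝 (f y - f x - (1 - 0) * φ ‖y - x‖)) :=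
    (Continuous.tendsto (by fun_prop) 0).mono_left nhdsWithin_le_nhds
  linarith [le_of_tendsto_of_tendsto hf'.tendsto_slope_zero_right bound_tendsto slope_le]

theorem setOf_le_subset_closedBall_of_strongConvexOn {m : ℝ} (hm : 0 < m)
    (hf : StrongConvexOn univ m f) {x₀ : E} {f' : E →L[ℝ] ℝ} (hf' : HasFDerivAt f f' x₀) :
    {x | f x ≤ f x₀} ⊆ Metric.closedBall x₀ (2 * ‖f'‖ / m) := by
  intro x (hx : f x ≤ f x₀)
  rw [mem_closedBall_iff_norm, le_div_iff₀ hm]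
  have quadratic_lower_bound : f x₀ + f' (x - x₀) + m / 2 * ‖x - x₀‖ ^ 2 ≤ f x :=
    add_lineDeriv_add_le_of_uniformConvexOn hf (mem_univ _) (mem_univ _)
      (hf'.hasLineDerivAt (x - x₀))
  have linear_lower_bound : -(‖f'‖ * ‖x - x₀‖) ≤ f' (x - x₀) :=
    (abs_le.1 (f'.le_opNorm (x - x₀))).1
  rcases (norm_nonneg (x - x₀)).eq_or_lt with norm_eq_zero | norm_pos
  · simp [← norm_eq_zero]
  · exact le_of_mul_le_mul_right (by linarith) norm_pos

theorem isCompact_setOf_le_of_strongConvexOn [ProperSpace E] {m : ℝ} (hm : 0 < m)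
    (hf : StrongConvexOn univ m f) (hfc : Continuous f) {x₀ : E}
    (hfd : DifferentiableAt ℝ f x₀) : IsCompact {x | f x ≤ f x₀} :=
  (isCompact_closedBall _ _).of_isClosed_subset (isClosed_le hfc continuous_const)
    (setOf_le_subset_closedBall_of_strongConvexOn hm hf hfd.hasFDerivAt)

theorem apply_add_smul_le_of_fderiv_le (hf : Differentiable ℝ f) {x v : E} {b t : ℝ}
    (ht : 0 ≤ t) (hb : ∀ s ∈ Ioo 0 t, fderiv ℝ f (x + s • v) v ≤ b) :
    f (x + t • v) ≤ f x + b * t := by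
  have deriv_line (s : ℝ) :
      HasDerivAt (fun s : ℝ ↦ f (x + s • v)) (fderiv ℝ f (x + s • v) v) s :=
    (hf _).hasFDerivAt.comp_hasDerivAt s
      (by simpa using ((hasDerivAt_id s).smul_const v).const_add x)
  have increment_le := (convex_Icc 0 t).image_sub_le_mul_sub_of_deriv_le
    (fun s _ ↦ (deriv_line s).continuousAt.continuousWithinAt)
    (fun s _ ↦ (deriv_line s).differentiableAt.differentiableWithinAt)
    (fun s hs ↦ (deriv_line s).deriv.trans_le (hb s (interior_Icc (a := (0 : ℝ)) ▸ hs)))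
    0 (left_mem_Icc.2 ht) t (right_mem_Icc.2 ht) ht
  simp only [zero_smul, add_zero, sub_zero] at increment_le
  linarith

theorem exists_forall_apply_add_smul_le_of_isCompact (hf : ContDiff ℝ 1 f) {K : Set (E × E)}
    (hK : IsCompact K) {b : ℝ} (hb : ∀ p ∈ K, fderiv ℝ f p.1 p.2 < b) :
    ∃ τ : ℝ, 0 < τ ∧ ∀ p ∈ K, ∀ t ∈ Icc 0 τ, f (p.1 + t • p.2) ≤ f p.1 + b * t := by
  have continuous_fderiv_segment :
      Continuous fun z : ℝ × E × E ↦ fderiv ℝ f (z.2.1 + z.1 • z.2.2) z.2.2 :=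
    ((hf.continuous_fderiv one_ne_zero).comp (by fun_prop)).clm_apply (by fun_prop)
  have fderiv_lt_near_zero :
      ∀ᶠ s : ℝ in 𝓝 0, ∀ p ∈ K, fderiv ℝ f (p.1 + s • p.2) p.2 < b :=
    hK.eventually_forall_of_forall_eventually fun p hp ↦
      continuous_fderiv_segment.continuousAt.eventually_lt_const (by simpa using hb p hp)
  obtain ⟨τ, hτ, fderiv_lt⟩ :=
    mem_nhdsGT_iff_exists_Ioo_subset.1 (mem_nhdsWithin_of_mem_nhds fderiv_lt_near_zero)
  exact ⟨τ, hτ, fun p hp t ht ↦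
    apply_add_smul_le_of_fderiv_le (hf.differentiable one_ne_zero) ht.1 fun _ hs ↦
      (fderiv_lt ⟨hs.1, hs.2.trans_le ht.2⟩ p hp).le⟩

end NormedSpace

section InnerProductSpace

variable {E : Type*} [NormedAddCommGroup E] [InnerProductSpace ℝ E] [CompleteSpace E] {f : E → ℝ}

theorem continuous_gradient_of_contDiff (hf : ContDiff ℝ 1 f) : Continuous (∇ f) :=
  (InnerProductSpace.toDual ℝ E).symm.continuous.comp (hf.continuous_fderiv one_ne_zero)

theorem uniform_descent_on_sublevel_set_general (hf : ContDiff ℝ 1 f) {K : Set E}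
    (hK : IsCompact K) {η a : ℝ} (hη : 0 ≤ η) (ha : a < η ^ 2) :
    ∃ τ : ℝ, 0 < τ ∧ ∀ x ∈ K, η ≤ ‖∇ f x‖ → ∀ t ∈ Icc 0 τ, f (x - t • ∇ f x) ≤ f x - a * t := by
  have gradient_continuous := continuous_gradient_of_contDiff hf
  have compact_directions :
      IsCompact ((fun x ↦ (x, -∇ f x)) '' (K ∩ {x | η ≤ ‖∇ f x‖})) :=
    (hK.inter_right (isClosed_le continuous_const gradient_continuous.norm)).image (by fun_prop)
  have fderiv_neg_gradient_lt (x : E) (hx : η ≤ ‖∇ f x‖) : fderiv ℝ f x (-∇ f x) < -a := by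
    rw [← inner_gradient_left, inner_neg_right, real_inner_self_eq_norm_sq, neg_lt_neg_iff]
    exact ha.trans_le (pow_le_pow_left₀ hη hx 2)
  obtain ⟨τ, hτ, descent⟩ := exists_forall_apply_add_smul_le_of_isCompact hf compact_directions
    (forall_mem_image.2 fun x hx ↦ fderiv_neg_gradient_lt x hx.2)
  refine ⟨τ, hτ, fun x hxK hx t ht ↦ ?_⟩
  simpa [← sub_eq_add_neg] using descent _ (mem_image_of_mem _ ⟨hxK, hx⟩) t ht

end InnerProductSpace

/-- Uniform sufficient decrease along the negative gradient on the
sublevel set, for points with gradient norm at least η. -/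
theorem uniform_descent_on_sublevel_set
    {n : ℕ} (f : EuclideanSpace ℝ (Fin n) → ℝ) (μ : ℝ) (hμ : 0 < μ)
    (hC1 : ContDiff ℝ 1 f)
    (hsc : ∀ x y : EuclideanSpace ℝ (Fin n), ∀ t : ℝ, t ∈ Set.Icc (0:ℝ) 1 →
      f (t • x + (1 - t) • y) ≤ t * f x + (1 - t) * f y - (μ / 2) * t * (1 - t) * ‖x - y‖ ^ 2)
    (x0 : EuclideanSpace ℝ (Fin n)) :
    ∀ η : ℝ, 0 < η → ∃ τ : ℝ, 0 < τ ∧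
      ∀ x : EuclideanSpace ℝ (Fin n), f x ≤ f x0 → η ≤ ‖gradient f x‖ →
        ∀ t ∈ Set.Icc (0:ℝ) τ,
          f (x - t • gradient f x) ≤ f x - (η ^ 2 / 2) * t := by
  have compact_sublevel := isCompact_setOf_le_of_strongConvexOn hμ
    (strongConvexOn_univ_of_forall_mem_Icc hsc) hC1.continuous (hC1.differentiable one_ne_zero x0)
  exact fun η hη ↦ uniform_descent_on_sublevel_set_general hC1 compact_sublevel hη.le
    (half_lt_self (pow_pos hη 2))
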